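/- Let M∞ be a symmetric 4×4 complex matrix, U ⊆ ℂ open, and A : U → GL₄(ℂ) holomorphic with A(λ)ᵀ·(M₀ − λ·M∞)·A(λ) = M₀ for all λ ∈ U. Define Φ(x,y,λ) := A(λ)·(x, y, xy, 1)ᵀ ∈ ℂ⁴. Then for all (x,y) ∈ ℂ² and λ ∈ U, the determinant of the 4×4 matrix whose columns are ∂Φ/∂x, ∂Φ/∂y, Φ, ∂Φ/∂λ (evaluated at (x,y,λ)) equals ½ · det(A(λ)) · Φᵀ·M∞·Φ. -/

import Mathlib

/-!
Write `v = (x, y, xy, 1)`, `F = Φ(x, y, ·) = A v` and `N = M₀ - λ M∞`, and let `w` solve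
`A w = F'`. The four columns are `A` applied to `(1,0,y,0)`, `(0,1,x,0)`, `v` and `w`, so the
determinant is `det A` times that of these four vectors. The latter is linear in `w` and equals
`vᵀ M₀ w`: the first three vectors span the tangent hyperplane of the cone `Q₀ = 0` at `v`
(`det_tangent`). The normalization `Aᵀ N A = M₀` gives `vᵀ M₀ w = Fᵀ N F'`, and it also makes
`Fᵀ N F = vᵀ M₀ v` constant on `U`; differentiating that and using the symmetry of `N` yields
`2 Fᵀ N F' = Fᵀ M∞ F` (`two_mul_form_deriv`).
-/

open Matrix

/-- `M₀` is the symmetric matrix of the quadratic form `Q₀(X) = X₁X₂ - X₃X₄`. -/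
def M0 : Matrix (Fin 4) (Fin 4) ℂ := !![0, 1, 0, 0; 1, 0, 0, 0; 0, 0, 0, -1; 0, 0, -1, 0]

lemma det_tangent (x y : ℂ) (w : Fin 4 → ℂ) :
    Matrix.det (Matrix.of fun (i : Fin 4) (j : Fin 4) =>
        ![(![1, 0, y, 0] : Fin 4 → ℂ) i, (![0, 1, x, 0] : Fin 4 → ℂ) i,
          (![x, y, x * y, 1] : Fin 4 → ℂ) i, w i] j)
      = ![x, y, x * y, 1] ⬝ᵥ (M0 *ᵥ w) := by
  simp [Matrix.det_succ_row_zero, Fin.sum_univ_succ, M0, Matrix.mulVec, dotProduct,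
    Fin.succAbove, Matrix.submatrix]
  ring

lemma M0_isSymm : M0.IsSymm := by
  ext i j
  fin_cases i <;> fin_cases j <;> simp [M0]

/-- If a curve `F` keeps `Fᵀ (M₀ - t M∞) F` constant near `l`, then
`2 Fᵀ (M₀ - l M∞) F' = Fᵀ M∞ F` at `l`. -/
lemma two_mul_form_deriv (Minf : Matrix (Fin 4) (Fin 4) ℂ) (hM : Minf.IsSymm)
    (F : ℂ → Fin 4 → ℂ) (F' : Fin 4 → ℂ) (l c : ℂ)
    (hF : ∀ i, HasDerivAt (fun t => F t i) (F' i) l)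
    (hc : ∀ᶠ t in nhds l, F t ⬝ᵥ ((M0 - t • Minf) *ᵥ F t) = c) :
    2 * (F l ⬝ᵥ ((M0 - l • Minf) *ᵥ F')) = F l ⬝ᵥ (Minf *ᵥ F l) := by
  have hN (i j : Fin 4) :
      HasDerivAt (fun t : ℂ => (M0 - t • Minf) i j) (-Minf i j) l := by
    simpa using ((hasDerivAt_id l).mul_const (Minf i j)).const_sub (M0 i j)
  have hd : HasDerivAt (fun t => F t ⬝ᵥ ((M0 - t • Minf) *ᵥ F t))
      (∑ i, (F' i * ∑ j, (M0 - l • Minf) i j * F l j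
        + F l i * ∑ j, (-Minf i j * F l j + (M0 - l • Minf) i j * F' j))) l := by
    simp only [dotProduct, Matrix.mulVec]
    exact HasDerivAt.fun_sum fun i _ => (hF i).fun_mul
      (HasDerivAt.fun_sum fun j _ => (hN i j).fun_mul (hF j))
  have h0 := hd.unique ((hasDerivAt_const l c).congr_of_eventuallyEq hc)
  have hs : (M0 - l • Minf).IsSymm := M0_isSymm.sub (hM.smul l)
  have hsw : F' ⬝ᵥ ((M0 - l • Minf) *ᵥ F l) = F l ⬝ᵥ ((M0 - l • Minf) *ᵥ F') := by
    rw [Matrix.dotProduct_mulVec, ← Matrix.mulVec_transpose, hs.eq, dotProduct_comm]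
  have h1 : F' ⬝ᵥ ((M0 - l • Minf) *ᵥ F l) - F l ⬝ᵥ (Minf *ᵥ F l)
      + F l ⬝ᵥ ((M0 - l • Minf) *ᵥ F') = 0 := by
    rw [← h0]
    simp only [dotProduct, Matrix.mulVec, Finset.sum_add_distrib, mul_add, neg_mul,
      Finset.sum_neg_distrib, mul_neg]
    ring
  rw [hsw] at h1
  linear_combination h1

/-- Homogeneous form of Proposition 3 of the paper: for the pencil-adapted coordinates
`Φ(x,y,λ) = A(λ)·(x,y,xy,1)ᵀ` of a normalizing holomorphic family `A(λ)` of the pencil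
`M_λ = M₀ − λM∞`, the determinant of the 4×4 matrix with columns
`∂Φ/∂x, ∂Φ/∂y, Φ, ∂Φ/∂λ` equals `½·det A(λ)·Φᵀ·M∞·Φ`. -/
theorem stmt3 (Minf : Matrix (Fin 4) (Fin 4) ℂ) (hMsymm : Minf.IsSymm)
    (U : Set ℂ) (hU : IsOpen U)
    (A : ℂ → Matrix (Fin 4) (Fin 4) ℂ)
    (hAhol : ∀ i j, DifferentiableOn ℂ (fun l => A l i j) U)
    (hAinv : ∀ l ∈ U, IsUnit (A l).det)
    (hAnorm : ∀ l ∈ U, (A l)ᵀ * (M0 - l • Minf) * A l = M0)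
    (Φ : ℂ → ℂ → ℂ → Fin 4 → ℂ)
    (hΦ : ∀ x y l, Φ x y l = A l *ᵥ ![x, y, x * y, 1]) :
    ∀ (x y : ℂ), ∀ l ∈ U,
      Matrix.det (Matrix.of fun (i : Fin 4) (j : Fin 4) =>
          ![deriv (fun t => Φ t y l i) x,
            deriv (fun t => Φ x t l i) y,
            Φ x y l i,
            deriv (fun t => Φ x y t i) l] j)
        = (1 / 2) * (A l).det * (Φ x y l ⬝ᵥ (Minf *ᵥ Φ x y l)) := by
  intro x y l hl
  set v : Fin 4 → ℂ := ![x, y, x * y, 1] with hv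
  have hdA (i j : Fin 4) : HasDerivAt (fun t => A t i j) (deriv (fun t => A t i j) l) l :=
    ((hAhol i j).differentiableAt (hU.mem_nhds hl)).hasDerivAt
  have hF (i : Fin 4) : HasDerivAt (fun t => Φ x y t i) (deriv (fun t => Φ x y t i) l) l := by
    apply DifferentiableAt.hasDerivAt
    simp only [hΦ, Matrix.mulVec, dotProduct]
    exact DifferentiableAt.fun_sum fun j _ => (hdA i j).differentiableAt.mul_const _
  have hx (i : Fin 4) : deriv (fun t => Φ t y l i) x = (A l *ᵥ ![1, 0, y, 0]) i := by
    have h : (fun t => Φ t y l i)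
        = fun t => t * (A l *ᵥ ![1, 0, y, 0]) i + (A l *ᵥ ![0, y, 0, 1]) i := by
      funext t
      simp [hΦ, Matrix.mulVec, dotProduct, Fin.sum_univ_four]
      ring
    rw [h]
    simp
  have hy (i : Fin 4) : deriv (fun t => Φ x t l i) y = (A l *ᵥ ![0, 1, x, 0]) i := by
    have h : (fun t => Φ x t l i)
        = fun t => t * (A l *ᵥ ![0, 1, x, 0]) i + (A l *ᵥ ![x, 0, 0, 1]) i := by
      funext t
      simp [hΦ, Matrix.mulVec, dotProduct, Fin.sum_univ_four]
      ring
    rw [h]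
    simp
  have hform (t : ℂ) (ht : t ∈ U) (u : Fin 4 → ℂ) :
      Φ x y t ⬝ᵥ ((M0 - t • Minf) *ᵥ (A t *ᵥ u)) = v ⬝ᵥ (M0 *ᵥ u) := by
    have h : M0 *ᵥ u = (A t)ᵀ *ᵥ ((M0 - t • Minf) *ᵥ (A t *ᵥ u)) := by
      rw [Matrix.mulVec_mulVec, Matrix.mulVec_mulVec, hAnorm t ht]
    rw [hΦ, h, Matrix.dotProduct_mulVec v, Matrix.vecMul_transpose]
  set F' : Fin 4 → ℂ := fun i => deriv (fun t => Φ x y t i) l with hF'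
  obtain ⟨w, hw⟩ : ∃ w, A l *ᵥ w = F' :=
    ⟨(A l)⁻¹ *ᵥ F', by rw [Matrix.mulVec_mulVec, Matrix.mul_nonsing_inv _ (hAinv l hl),
      Matrix.one_mulVec]⟩
  have key := two_mul_form_deriv Minf hMsymm (Φ x y) F' l (v ⬝ᵥ (M0 *ᵥ v)) hF (by
    filter_upwards [hU.mem_nhds hl] with t ht
    rw [← hform t ht v, hΦ])
  rw [← hw, hform l hl w] at key
  have hfac : (Matrix.of fun (i : Fin 4) (j : Fin 4) =>
          ![deriv (fun t => Φ t y l i) x, deriv (fun t => Φ x t l i) y, Φ x y l i,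
            deriv (fun t => Φ x y t i) l] j)
      = A l * Matrix.of fun (i : Fin 4) (j : Fin 4) =>
        ![(![1, 0, y, 0] : Fin 4 → ℂ) i, (![0, 1, x, 0] : Fin 4 → ℂ) i,
          (![x, y, x * y, 1] : Fin 4 → ℂ) i, w i] j := by
    ext i j
    fin_cases j
    · exact hx i
    · exact hy i
    · exact congrFun (hΦ x y l) i
    · exact (congrFun hw i).symm
  rw [hfac, Matrix.det_mul, det_tangent, ← hv]
  linear_combination (1 / 2) * (A l).det * key
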